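/- Fix a labelled Markov chain ⟨S, L, τ, ℓ⟩. Robust probabilistic bisimilarity ≃ is a probabilistic bisimulation: it is an equivalence relation on S, and for all (s,t) with s ≃ t, ℓ(s) = ℓ(t) and there exists ω ∈ Ω(τ(s),τ(t)) with support(ω) ⊆ ≃. -/

import Mathlib

open Finset Filter
open scoped Classical

/-- `μ` is a probability distribution on the finite type `X`. -/
def IsDist {X : Type*} [Fintype X] (μ : X → ℝ) : Prop :=
  (∀ x, 0 ≤ μ x) ∧ ∑ x, μ x = 1

/-- `ω` is a coupling of the distributions `μ` and `ν`. -/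
def IsCoupling {X : Type*} [Fintype X] (ω : X × X → ℝ) (μ ν : X → ℝ) : Prop :=
  IsDist ω ∧ (∀ x, ∑ y, ω (x, y) = μ x) ∧ (∀ x, ∑ y, ω (y, x) = ν x)

/-- Total variation distance: the maximum pointwise difference. -/
noncomputable def dTV {X : Type*} [Fintype X] (μ ν : X → ℝ) : ℝ :=
  ⨆ x, |μ x - ν x|

/-- The support of a (sub)distribution: points of positive probability. -/
def psupp {X : Type*} (μ : X → ℝ) : Set X := {x | 0 < μ x}

/-- Distance between functions into distributions. -/
noncomputable def dF {A B : Type*} [Fintype B] (f g : A → B → ℝ) : ℝ :=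
  ⨆ a, dTV (f a) (g a)

/-- `τ` is a transition probability function on `S`. -/
def IsTransFn {S : Type*} [Fintype S] (τ : S → S → ℝ) : Prop := ∀ s, IsDist (τ s)

/-- The diagonal `S²_Δ`. -/
def SDelta (S : Type*) : Set (S × S) := {p | p.1 = p.2}

/-- `P` is a policy for `τ` (with labelling `ℓ`). -/
def IsPolicy {S L : Type*} [Fintype S] (ℓ : S → L) (τ : S → S → ℝ)
    (P : S × S → S × S → ℝ) : Prop :=
  (∀ p, IsDist (P p)) ∧
  (∀ p : S × S, ℓ p.1 = ℓ p.2 → IsCoupling (P p) (τ p.1) (τ p.2)) ∧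
  (∀ p : S × S, ℓ p.1 ≠ ℓ p.2 → psupp (P p) = {p})

/-- A policy is `S²_Δ`-closed if the support of `P (s,s)` lies in the diagonal. -/
def DeltaClosed {S : Type*} (P : S × S → S × S → ℝ) : Prop :=
  ∀ s : S, psupp (P (s, s)) ⊆ SDelta S

/-- `d` is a `[0,1]`-valued function. -/
def Is01 {A : Type*} (d : A → ℝ) : Prop := ∀ a, 0 ≤ d a ∧ d a ≤ 1

/-- `d` is the least fixed point of `F` on the complete lattice of `[0,1]`-valued functions. -/
def IsLfpOn {A : Type*} (F : (A → ℝ) → (A → ℝ)) (d : A → ℝ) : Prop :=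
  Is01 d ∧ F d = d ∧ ∀ e, Is01 e → F e = e → ∀ a, d a ≤ e a

/-- The map `Γ_P` whose least fixed point is `γ_P`. -/
noncomputable def GammaF {S L : Type*} [Fintype S] (ℓ : S → L)
    (P : S × S → S × S → ℝ) (d : S × S → ℝ) : S × S → ℝ :=
  fun p => if ℓ p.1 ≠ ℓ p.2 then 1 else ∑ q, P p q * d q

/-- The map `Δ_τ` whose least fixed point is the probabilistic bisimilarity distance `δ_τ`. -/
noncomputable def DeltaF {S L : Type*} [Fintype S] (ℓ : S → L)
    (τ : S → S → ℝ) (d : S × S → ℝ) : S × S → ℝ :=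
  fun p => if ℓ p.1 ≠ ℓ p.2 then 1
    else sInf {r | ∃ ω, IsCoupling ω (τ p.1) (τ p.2) ∧ r = ∑ q, ω q * d q}

/-- The map whose least fixed point is `ρ_P`, the probability of reaching `S²_Δ`. -/
noncomputable def ReachF {S : Type*} [Fintype S]
    (P : S × S → S × S → ℝ) (e : S × S → ℝ) : S × S → ℝ :=
  fun p => if p.1 = p.2 then 1 else ∑ q, P p q * e q

/-- States `s` and `t` are robustly probabilistically bisimilar. -/
def Robust {S L : Type*} [Fintype S] (ℓ : S → L) (τ : S → S → ℝ) (s t : S) : Prop :=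
  ∃ P ρ, IsPolicy ℓ τ P ∧ IsLfpOn (ReachF P) ρ ∧ ρ (s, t) = 1

/-- `R` is a probabilistic bisimulation. -/
def IsBisim {S L : Type*} [Fintype S] (ℓ : S → L) (τ : S → S → ℝ)
    (R : Set (S × S)) : Prop :=
  Equivalence (fun s t => (s, t) ∈ R) ∧
  ∀ p ∈ R, ℓ p.1 = ℓ p.2 ∧ ∃ ω, IsCoupling ω (τ p.1) (τ p.2) ∧ psupp ω ⊆ R

/-- Probabilistic bisimilarity `∼`. -/
def Bisimilar {S L : Type*} [Fintype S] (ℓ : S → L) (τ : S → S → ℝ) (s t : S) : Prop :=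
  ∃ R, IsBisim ℓ τ R ∧ (s, t) ∈ R

/-- A step of a path in `⟨S×S, P⟩` supported by `R`. -/
def SupStep {S : Type*} (P : S × S → S × S → ℝ) (R : Set (S × S)) (a b : S × S) : Prop :=
  a ∈ R ∧ psupp (P a) ⊆ R ∧ 0 < P a b

/-- `R` supports a path from `p` to `S²_Δ` in `⟨S×S, P⟩`. -/
def SupportsPathToDelta {S : Type*} (P : S × S → S × S → ℝ) (R : Set (S × S))
    (p : S × S) : Prop :=
  ∃ q : S × S, q.1 = q.2 ∧ Relation.ReflTransGen (SupStep P R) p q ∧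
    q ∈ R ∧ psupp (P q) ⊆ R

/-- `R` is a robust bisimulation. -/
def IsRobustBisim {S L : Type*} [Fintype S] (ℓ : S → L) (τ : S → S → ℝ)
    (R : Set (S × S)) : Prop :=
  IsBisim ℓ τ R ∧ ∀ p ∈ R, ∃ P, IsPolicy ℓ τ P ∧ SupportsPathToDelta P R p

/-- The function `Filter` from the algorithm. -/
def FilterFn {S L : Type*} [Fintype S] (ℓ : S → L) (τ : S → S → ℝ)
    (R : Set (S × S)) : Set (S × S) :=
  {p ∈ R | ∃ P, IsPolicy ℓ τ P ∧ SupportsPathToDelta P R p}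

/-- The function `Prune` from the algorithm. -/
def PruneFn {S : Type*} (Q : Set (S × S)) : Set (S × S) :=
  {p ∈ Q | ∀ u : S, ((p.2, u) ∈ Q → (p.1, u) ∈ Q) ∧ ((u, p.1) ∈ Q → (u, p.2) ∈ Q)}

/-- `B` is the greatest probabilistic bisimulation contained in `Q` (i.e. `B = Bisim(Q)`). -/
def IsGreatestBisimIn {S L : Type*} [Fintype S] (ℓ : S → L) (τ : S → S → ℝ)
    (Q B : Set (S × S)) : Prop :=
  IsBisim ℓ τ B ∧ B ⊆ Q ∧ ∀ B', IsBisim ℓ τ B' → B' ⊆ Q → B' ⊆ B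

/-- Reachability in the Markov chain `⟨S×S, P⟩`. -/
def Reach {S : Type*} (P : S × S → S × S → ℝ) (p q : S × S) : Prop :=
  Relation.ReflTransGen (fun a b => 0 < P a b) p q

/-- `C` is a communication class of `⟨S×S, P⟩`. -/
def IsCommClass {S : Type*} (P : S × S → S × S → ℝ) (C : Set (S × S)) : Prop :=
  ∃ p, C = {q | Reach P p q ∧ Reach P q p}

/-- `C` is closed: no transition of positive probability leaves `C`. -/
def IsClosedClass {S : Type*} (P : S × S → S × S → ℝ) (C : Set (S × S)) : Prop :=
  ∀ p ∈ C, psupp (P p) ⊆ C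

/-- Existence of the least fixed point. -/
lemma exists_lfp_le {A : Type*} (F : (A → ℝ) → (A → ℝ))
    (hmono : ∀ d e, Is01 d → Is01 e → (∀ a, d a ≤ e a) → ∀ a, F d a ≤ F e a)
    (h01 : ∀ d, Is01 d → Is01 (F d)) :
    ∃ ρ, IsLfpOn F ρ ∧ ∀ e, Is01 e → (∀ a, F e a ≤ e a) → ∀ a, ρ a ≤ e a := by
  have hc : ∀ d : A → Set.Icc (0:ℝ) 1, Is01 (fun a => (d a : ℝ)) := fun d a => (d a).2
  let G : (A → Set.Icc (0:ℝ) 1) →o (A → Set.Icc (0:ℝ) 1) :=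
    { toFun := fun d a => ⟨F (fun a => (d a : ℝ)) a, h01 _ (hc d) a⟩
      monotone' := fun d e hde a => hmono _ _ (hc d) (hc e) (fun a => hde a) a }
  have key : ∀ e, Is01 e → (∀ a, F e a ≤ e a) → ∀ a, ((OrderHom.lfp G) a : ℝ) ≤ e a := by
    intro e he hFe a
    have : OrderHom.lfp G ≤ (fun a => ⟨e a, he a⟩ : A → Set.Icc (0:ℝ) 1) :=
      OrderHom.lfp_le G (fun a => hFe a)
    exact this a
  refine ⟨fun a => (OrderHom.lfp G a : ℝ), ⟨hc _, ?_, ?_⟩, key⟩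
  · funext a
    have := congrFun (OrderHom.map_lfp G) a
    exact congrArg Subtype.val this
  · intro e he hFe
    exact key e he (fun a => (congrFun hFe a).le)

lemma reach_mono {S : Type*} [Fintype S] (P : S × S → S × S → ℝ) (hP : ∀ p, IsDist (P p))
    (d e : S × S → ℝ) (h : ∀ a, d a ≤ e a) (a : S × S) : ReachF P d a ≤ ReachF P e a := by
  unfold ReachF
  split_ifs
  · exact le_rfl
  · exact Finset.sum_le_sum fun q _ => mul_le_mul_of_nonneg_left (h q) ((hP a).1 q)

lemma reach_01 {S : Type*} [Fintype S] (P : S × S → S × S → ℝ) (hP : ∀ p, IsDist (P p))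
    (d : S × S → ℝ) (h : Is01 d) : Is01 (ReachF P d) := by
  intro a
  unfold ReachF
  split_ifs
  · norm_num
  · refine ⟨Finset.sum_nonneg fun q _ => mul_nonneg ((hP a).1 q) (h q).1, ?_⟩
    calc ∑ q, P a q * d q ≤ ∑ q, P a q * 1 :=
          Finset.sum_le_sum fun q _ => mul_le_mul_of_nonneg_left (h q).2 ((hP a).1 q)
      _ = 1 := by simp [(hP a).2]

lemma reach_exists {S : Type*} [Fintype S] (P : S × S → S × S → ℝ) (hP : ∀ p, IsDist (P p)) :
    ∃ ρ, IsLfpOn (ReachF P) ρ ∧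
      ∀ e, Is01 e → (∀ a, ReachF P e a ≤ e a) → ∀ a, ρ a ≤ e a :=
  exists_lfp_le _ (fun d e _ _ h => reach_mono P hP d e h) (reach_01 P hP)

/-- A closed set disjoint from the diagonal has reachability probability zero. -/
lemma reach_zero {S : Type*} [Fintype S] (P : S × S → S × S → ℝ) (hP : ∀ p, IsDist (P p))
    (ρ : S × S → ℝ) (hρ : IsLfpOn (ReachF P) ρ) (B : Set (S × S))
    (hB : ∀ p ∈ B, p.1 ≠ p.2 ∧ psupp (P p) ⊆ B) (p : S × S) (hp : p ∈ B) : ρ p ≤ 0 := by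
  obtain ⟨ρ', hρ', hle⟩ := reach_exists P hP
  have h1 := hρ.2.2 ρ' hρ'.1 hρ'.2.1 p
  have h2 := hle (fun q => if q ∈ B then 0 else ρ q) (by
    intro a
    dsimp only
    split_ifs
    · norm_num
    · exact hρ.1 a) (by
    intro a
    by_cases ha : a ∈ B
    · have : ReachF P (fun q => if q ∈ B then 0 else ρ q) a = 0 := by
        unfold ReachF
        rw [if_neg (hB a ha).1]
        refine Finset.sum_eq_zero fun q _ => ?_
        by_cases hq : q ∈ B
        · simp [hq]
        · have : P a q = 0 := le_antisymm
            (not_lt.1 fun h => hq ((hB a ha).2 h)) ((hP a).1 q)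
          simp [this]
      simp [this, ha]
    · simp only [ha, if_false]
      calc _ ≤ ReachF P ρ a := by
            apply reach_mono P hP
            intro q
            split_ifs
            · exact (hρ.1 q).1
            · exact le_rfl
        _ = ρ a := congrFun hρ.2.1 a) p
  simp only [hp, if_true] at h2
  exact h1.trans h2

/-- `p` can reach the diagonal in `n` steps using couplings supported in `R`. -/
def GoodN {S : Type*} [Fintype S] (τ : S → S → ℝ) (R : Set (S × S)) : ℕ → S × S → Prop
  | 0, p => p.1 = p.2
  | n + 1, p => ∃ ω, IsCoupling ω (τ p.1) (τ p.2) ∧ psupp ω ⊆ R ∧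
      ∃ q, 0 < ω q ∧ GoodN τ R n q

lemma GoodN.mono {S : Type*} [Fintype S] {τ : S → S → ℝ} {R R' : Set (S × S)} (h : R ⊆ R')
    (n : ℕ) : ∀ p, GoodN τ R n p → GoodN τ R' n p := by
  induction n with
  | zero => exact fun p hp => hp
  | succ n ih =>
    rintro p ⟨ω, h1, h2, q, h3, h4⟩
    exact ⟨ω, h1, h2.trans h, q, h3, ih q h4⟩

lemma coupling_swap {S : Type*} [Fintype S] {ω : S × S → ℝ} {μ ν : S → ℝ}
    (h : IsCoupling ω μ ν) : IsCoupling (fun q => ω q.swap) ν μ := by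
  refine ⟨⟨fun x => h.1.1 _, ?_⟩, h.2.2, h.2.1⟩
  rw [← h.1.2]
  exact Equiv.sum_comp (Equiv.prodComm S S) ω

lemma GoodN.swap {S : Type*} [Fintype S] {τ : S → S → ℝ} {R : Set (S × S)}
    (n : ℕ) : ∀ p, GoodN τ R n p → GoodN τ (Prod.swap ⁻¹' R) n p.swap := by
  induction n with
  | zero => exact fun p hp => Eq.symm hp
  | succ n ih =>
    rintro p ⟨ω, h1, h2, q, h3, h4⟩
    exact ⟨fun q => ω q.swap, coupling_swap h1, fun a ha => h2 ha, q.swap, by simpa using h3,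
      ih q h4⟩

lemma coupling_mk {S : Type*} [Fintype S] {ω : S × S → ℝ} {μ ν : S → ℝ} (hμ : IsDist μ)
    (h0 : ∀ q, 0 ≤ ω q) (h1 : ∀ x, ∑ y, ω (x, y) = μ x) (h2 : ∀ x, ∑ y, ω (y, x) = ν x) :
    IsCoupling ω μ ν := by
  refine ⟨⟨h0, ?_⟩, h1, h2⟩
  rw [Fintype.sum_prod_type]
  simp [h1, hμ.2]

lemma coupling_diag {S : Type*} [Fintype S] {μ : S → ℝ} (hμ : IsDist μ) :
    ∃ ω, IsCoupling ω μ μ ∧ psupp ω ⊆ SDelta S := by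
  refine ⟨fun q => if q.1 = q.2 then μ q.1 else 0, coupling_mk hμ ?_ ?_ ?_, ?_⟩
  · intro q
    split_ifs
    · exact hμ.1 _
    · exact le_rfl
  · intro x; simp
  · intro x; simp
  · intro q hq
    by_contra h
    have h' : ¬ q.1 = q.2 := h
    simp [psupp, h'] at hq

lemma coupling_prod {S : Type*} [Fintype S] {μ ν : S → ℝ} (hμ : IsDist μ) (hν : IsDist ν) :
    IsCoupling (fun q => μ q.1 * ν q.2) μ ν := by
  refine coupling_mk hμ (fun q => mul_nonneg (hμ.1 _) (hν.1 _)) ?_ ?_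
  · intro x; simp [← Finset.mul_sum, hν.2]
  · intro x; simp [← Finset.sum_mul, hμ.2]

/-- Composition of couplings. -/
lemma coupling_comp {S : Type*} [Fintype S] {ω ω' : S × S → ℝ} {μ ν κ : S → ℝ}
    (h : IsCoupling ω μ ν) (h' : IsCoupling ω' ν κ) (hμ : IsDist μ) :
    ∃ η, IsCoupling η μ κ ∧ ∀ x z, 0 < η (x, z) ↔ ∃ y, 0 < ω (x, y) ∧ 0 < ω' (y, z) := by
  have hz1 : ∀ x y, ν y = 0 → ω (x, y) = 0 := by
    intro x y hy
    rw [← h.2.2 y, Finset.sum_eq_zero_iff_of_nonneg (fun _ _ => h.1.1 _)] at hy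
    exact hy x (Finset.mem_univ _)
  have hz2 : ∀ y z, ν y = 0 → ω' (y, z) = 0 := by
    intro y z hy
    rw [← h'.2.1 y, Finset.sum_eq_zero_iff_of_nonneg (fun _ _ => h'.1.1 _)] at hy
    exact hy z (Finset.mem_univ _)
  have hν : ∀ y, 0 ≤ ν y := fun y => by
    rw [← h.2.2 y]; exact Finset.sum_nonneg fun _ _ => h.1.1 _
  have h0 : ∀ x y z, 0 ≤ ω (x, y) * ω' (y, z) / ν y := fun x y z =>
    div_nonneg (mul_nonneg (h.1.1 _) (h'.1.1 _)) (hν y)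
  refine ⟨fun q => ∑ y, ω (q.1, y) * ω' (y, q.2) / ν y, coupling_mk hμ ?_ ?_ ?_, ?_⟩
  · exact fun q => Finset.sum_nonneg fun y _ => h0 _ _ _
  · intro x
    dsimp only
    rw [Finset.sum_comm, ← h.2.1 x]
    refine Finset.sum_congr rfl fun y _ => ?_
    rw [← Finset.sum_div, ← Finset.mul_sum, h'.2.1 y]
    by_cases hy : ν y = 0
    · simp [hz1 x y hy]
    · field_simp
  · intro z
    dsimp only
    rw [Finset.sum_comm, ← h'.2.2 z]
    refine Finset.sum_congr rfl fun y _ => ?_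
    rw [← Finset.sum_div, ← Finset.sum_mul, h.2.2 y]
    by_cases hy : ν y = 0
    · simp [hz2 y z hy]
    · field_simp
  · intro x z
    dsimp only
    rw [Finset.sum_pos_iff_of_nonneg (fun y _ => h0 _ _ _)]
    constructor
    · rintro ⟨y, _, hy⟩
      refine ⟨y, lt_of_le_of_ne (h.1.1 _) ?_, lt_of_le_of_ne (h'.1.1 _) ?_⟩
      · intro h; simp [← h] at hy
      · intro h; simp [← h] at hy
    · rintro ⟨y, h1, h2⟩
      refine ⟨y, Finset.mem_univ _, div_pos (mul_pos h1 h2) (lt_of_le_of_ne (hν y) ?_)⟩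
      intro h3
      exact h1.ne' (hz1 x y h3.symm)

/-- Sets all of whose elements are good consist of robust pairs. -/
lemma robust_of_good {S L : Type*} [Fintype S] (ℓ : S → L) (τ : S → S → ℝ) (hτ : IsTransFn τ)
    (R : Set (S × S)) (hl : ∀ p ∈ R, ℓ p.1 = ℓ p.2) (hR : ∀ p ∈ R, ∃ n, GoodN τ R n p)
    (p : S × S) (hp : p ∈ R) : Robust ℓ τ p.1 p.2 := by
  let rk : S × S → ℕ := fun p => sInf {n | GoodN τ R n p}
  have hrk : ∀ p ∈ R, GoodN τ R (rk p) p := fun p hp => Nat.sInf_mem (hR p hp)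
  have hrk' : ∀ p n, GoodN τ R n p → rk p ≤ n := fun p n h => Nat.sInf_le h
  have hex : ∀ p : S × S, ∃ ω, IsDist ω ∧ (ℓ p.1 = ℓ p.2 → IsCoupling ω (τ p.1) (τ p.2)) ∧
      (ℓ p.1 ≠ ℓ p.2 → psupp ω = {p}) ∧
      (p ∈ R → p.1 ≠ p.2 → psupp ω ⊆ R ∧ ∃ q, 0 < ω q ∧ rk q < rk p) := by
    intro p
    by_cases hlp : ℓ p.1 = ℓ p.2
    · by_cases h : p ∈ R ∧ p.1 ≠ p.2
      · have hg := hrk p h.1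
        cases hn : rk p with
        | zero => rw [hn] at hg; exact absurd hg h.2
        | succ n =>
          rw [hn] at hg
          obtain ⟨ω, h1, h2, q, h3, h4⟩ := hg
          exact ⟨ω, h1.1, fun _ => h1, fun h => absurd hlp h, fun _ _ =>
            ⟨h2, q, h3, Nat.lt_succ_of_le (hrk' q n h4)⟩⟩
      · have := coupling_prod (hτ p.1) (hτ p.2)
        exact ⟨_, this.1, fun _ => this, fun h => absurd hlp h, fun h1 h2 => absurd ⟨h1, h2⟩ h⟩
    · refine ⟨fun q => if q = p then 1 else 0, ⟨?_, by simp⟩, fun h => absurd h hlp, ?_,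
        fun h => absurd (hl p h) hlp⟩
      · intro q; dsimp only; split_ifs <;> norm_num
      · intro _; ext q
        by_cases hq : q = p <;> simp [psupp, hq]
  choose P hP1 hP2 hP3 hP4 using hex
  obtain ⟨ρ, hρ, -⟩ := reach_exists P hP1
  refine ⟨P, ρ, ⟨hP1, hP2, hP3⟩, hρ, ?_⟩
  obtain ⟨m, hmR, hm⟩ := Set.exists_min_image R ρ (Set.toFinite R) ⟨p, hp⟩
  obtain ⟨a, ⟨haR, ham⟩, ha⟩ := Set.exists_min_image {a | a ∈ R ∧ ρ a = ρ m} rk (Set.toFinite _)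
    ⟨m, hmR, rfl⟩
  have hfix := congrFun hρ.2.1 a
  unfold ReachF at hfix
  by_cases had : a.1 = a.2
  · rw [if_pos had] at hfix
    refine le_antisymm (hρ.1 p).2 ?_
    calc (1:ℝ) = ρ m := by rw [← ham, ← hfix]
      _ ≤ ρ p := hm p hp
  · exfalso
    rw [if_neg had] at hfix
    obtain ⟨hs, q, hq, hqr⟩ := hP4 a haR had
    have hqR : q ∈ R := hs hq
    have hge : ∀ b, 0 ≤ P a b * (ρ b - ρ m) := by
      intro b
      by_cases hb : 0 < P a b
      · exact mul_nonneg hb.le (sub_nonneg.2 (hm b (hs hb)))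
      · simp [le_antisymm (not_lt.1 hb) ((hP1 a).1 b)]
    have hsum : ∑ b, P a b * (ρ b - ρ m) = 0 := by
      simp only [mul_sub, Finset.sum_sub_distrib, ← Finset.sum_mul, (hP1 a).2]
      linarith
    rw [Finset.sum_eq_zero_iff_of_nonneg (fun b _ => hge b)] at hsum
    have h0 := hsum q (Finset.mem_univ _)
    have hqm : ρ q = ρ m := by
      rcases mul_eq_zero.1 h0 with h | h
      · exact absurd h hq.ne'
      · linarith
    exact absurd (ha q ⟨hqR, hqm⟩) (not_le.2 hqr)

lemma good_of_robust {S L : Type*} [Fintype S] (ℓ : S → L) (τ : S → S → ℝ)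
    (p : S × S) (hp : Robust ℓ τ p.1 p.2) :
    ℓ p.1 = ℓ p.2 ∧ ∃ n, GoodN τ {p : S × S | Robust ℓ τ p.1 p.2} n p := by
  obtain ⟨P, ρ, hP, hρ, h1⟩ := hp
  change ρ p = 1 at h1
  have hlab : ∀ q, ρ q = 1 → ℓ q.1 = ℓ q.2 := by
    intro q hq
    by_contra hne
    have := reach_zero P hP.1 ρ hρ {p | ℓ p.1 ≠ ℓ p.2} (by
      intro a ha
      refine ⟨fun h => ha (by rw [h]), ?_⟩
      rw [hP.2.2 a ha]
      rintro b rfl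
      exact ha) q hne
    linarith
  have hcl : ∀ a, ρ a = 1 → a.1 ≠ a.2 → ∀ b, 0 < P a b → ρ b = 1 := by
    intro a ha had b hb
    have hfix := congrFun hρ.2.1 a
    unfold ReachF at hfix
    rw [if_neg had, ha] at hfix
    have hsum : ∑ b, P a b * (1 - ρ b) = 0 := by
      simp only [mul_sub, Finset.sum_sub_distrib, mul_one, (hP.1 a).2]
      linarith
    rw [Finset.sum_eq_zero_iff_of_nonneg (fun b _ =>
      mul_nonneg ((hP.1 a).1 b) (sub_nonneg.2 (hρ.1 b).2))] at hsum
    rcases mul_eq_zero.1 (hsum b (Finset.mem_univ _)) with h | h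
    · exact absurd h hb.ne'
    · linarith
  have hsub : {q | ρ q = 1} ⊆ {p : S × S | Robust ℓ τ p.1 p.2} := fun q hq => ⟨P, ρ, hP, hρ, hq⟩
  refine ⟨hlab p h1, ?_⟩
  by_contra hne
  have := reach_zero P hP.1 ρ hρ
    {q | ρ q = 1 ∧ ¬ ∃ n, GoodN τ {p : S × S | Robust ℓ τ p.1 p.2} n q} (by
      rintro a ⟨ha1, ha2⟩
      have had : a.1 ≠ a.2 := fun h => ha2 ⟨0, h⟩
      refine ⟨had, fun b hb => ⟨hcl a ha1 had b hb, ?_⟩⟩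
      rintro ⟨n, hn⟩
      exact ha2 ⟨n + 1, P a, hP.2.1 a (hlab a ha1),
        fun c hc => hsub (hcl a ha1 had c hc), b, hb, hn⟩) p ⟨h1, hne⟩
  linarith

/-- Lemma 6: robust probabilistic bisimilarity `≃` is a probabilistic bisimulation. -/
theorem robust_is_bisimulation {S L : Type*} [Fintype S] [Nonempty S] [Fintype L]
    (ℓ : S → L) (hℓ : ∃ a b : S, ℓ a ≠ ℓ b)
    (τ : S → S → ℝ) (hτ : IsTransFn τ) :
    IsBisim ℓ τ {p : S × S | Robust ℓ τ p.1 p.2} := by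
  have hgood := good_of_robust ℓ τ
  have hrefl : ∀ s, Robust ℓ τ s s := fun s =>
    robust_of_good ℓ τ hτ (SDelta S) (fun p hp => by rw [show p.1 = p.2 from hp])
      (fun p hp => ⟨0, hp⟩) (s, s) rfl
  have hcoup : ∀ p : S × S, Robust ℓ τ p.1 p.2 → ∃ ω, IsCoupling ω (τ p.1) (τ p.2) ∧
      psupp ω ⊆ {p : S × S | Robust ℓ τ p.1 p.2} := by
    rintro ⟨s, t⟩ hp
    by_cases hd : s = t
    · subst hd
      obtain ⟨ω, h1, h2⟩ := coupling_diag (hτ s)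
      refine ⟨ω, h1, fun q hq => ?_⟩
      have : q.1 = q.2 := h2 hq
      change Robust ℓ τ q.1 q.2
      rw [this]
      exact hrefl _
    · obtain ⟨n, hn⟩ := (hgood _ hp).2
      cases n with
      | zero => exact absurd hn hd
      | succ n =>
        obtain ⟨ω, h1, h2, -⟩ := hn
        exact ⟨ω, h1, h2⟩
  refine ⟨⟨hrefl, ?_, ?_⟩, fun p hp => ⟨(hgood p hp).1, hcoup p hp⟩⟩
  · intro s t hst
    refine robust_of_good ℓ τ hτ (Prod.swap ⁻¹' {p : S × S | Robust ℓ τ p.1 p.2}) ?_ ?_ (t, s) hst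
    · intro p hp
      exact ((hgood p.swap hp).1).symm
    · intro p hp
      obtain ⟨n, hn⟩ := (hgood p.swap hp).2
      exact ⟨n, by simpa using GoodN.swap n _ hn⟩
  · intro s t u hst htu
    let R' : Set (S × S) := {p | ∃ y, Robust ℓ τ p.1 y ∧ Robust ℓ τ y p.2}
    have hsub : {p : S × S | Robust ℓ τ p.1 p.2} ⊆ R' := fun p hp => ⟨p.1, hrefl _, hp⟩
    have key : ∀ n x y z, GoodN τ {p : S × S | Robust ℓ τ p.1 p.2} n (x, y) →
        Robust ℓ τ y z → ∃ m, GoodN τ R' m (x, z) := by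
      intro n
      induction n with
      | zero =>
        intro x y z hxy hyz
        have hxy' : x = y := hxy
        subst hxy'
        obtain ⟨m, hm⟩ := (hgood (x, z) hyz).2
        exact ⟨m, GoodN.mono hsub m _ hm⟩
      | succ n ih =>
        rintro x y z ⟨ω, h1, h2, ⟨x', y'⟩, h3, h4⟩ hyz
        obtain ⟨ω', h1', h2'⟩ := hcoup (y, z) hyz
        obtain ⟨η, hη, hηs⟩ := coupling_comp h1 h1' (hτ x)
        have hy' : 0 < τ y y' := by
          rw [← h1.2.2 y']
          exact lt_of_lt_of_le h3
            (Finset.single_le_sum (f := fun a => ω (a, y')) (fun _ _ => h1.1.1 _)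
              (Finset.mem_univ x'))
        rw [← h1'.2.1 y', Finset.sum_pos_iff_of_nonneg (fun _ _ => h1'.1.1 _)] at hy'
        obtain ⟨z', -, hz'⟩ := hy'
        obtain ⟨m, hm⟩ := ih x' y' z' h4 (h2' hz')
        refine ⟨m + 1, η, hη, ?_, (x', z'), (hηs x' z').2 ⟨y', h3, hz'⟩, hm⟩
        rintro ⟨a, c⟩ hac
        obtain ⟨b, hb1, hb2⟩ := (hηs a c).1 hac
        exact ⟨b, h2 hb1, h2' hb2⟩
    refine robust_of_good ℓ τ hτ R' ?_ ?_ (s, u) ⟨t, hst, htu⟩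
    · rintro p ⟨y, h1, h2⟩
      exact ((hgood (p.1, y) h1).1).trans (hgood (y, p.2) h2).1
    · rintro ⟨x, z⟩ ⟨y, h1, h2⟩
      obtain ⟨n, hn⟩ := (hgood (x, y) h1).2
      exact key n x y z hn h2
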